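/- Let L be a complete orthomodular lattice containing an element z with ⊥ < z < ⊤. Then for every x ∈ L, the infimum (in L) of the set {δ_B(x) | B is a nontrivial complete atomic Boolean subalgebra of L} equals x. Consequently, daseinisation is injective: if δ_B(x) = δ_B(y) for every nontrivial complete atomic Boolean subalgebra B of L, then x = y. -/

import Mathlib

/-! If `x` belongs to `B`, then `δ_B(x) = x`, while `x ≤ δ_B(x)` for every `B`. Hence it suffices
that every `x` lies in some nontrivial complete atomic Boolean subalgebra: if `x` is neither `⊥` nor
`⊤`, then `{⊥, x, xᗮ, ⊤}` is one, and `{⊥, z, zᗮ, ⊤}` serves for the two remaining elements. -/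

/-- The daseinisation of `x` to a subset `B` of a complete lattice:
`δ_B(x) := sInf {y ∈ B | x ≤ y}`. -/
def das {L : Type*} [CompleteLattice L] (B : Set L) (x : L) : L :=
  sInf {y ∈ B | x ≤ y}

/-- `a` is an atom of the subset `C`: `a ∈ C`, `a ≠ ⊥`, and every element of `C`
strictly below `a` is `⊥`. -/
def IsAtomOf {L : Type*} [CompleteLattice L] (C : Set L) (a : L) : Prop :=
  a ∈ C ∧ a ≠ ⊥ ∧ ∀ y ∈ C, y < a → y = ⊥

/-- `B` is a nontrivial complete atomic Boolean subalgebra of `L` (with respect to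
the orthocomplementation `oc`). -/
def IsCABS {L : Type*} [CompleteLattice L] (oc : L → L) (B : Set L) : Prop :=
  (∀ S ⊆ B, sInf S ∈ B) ∧ (∀ S ⊆ B, sSup S ∈ B) ∧
  (∀ b ∈ B, oc b ∈ B) ∧
  (∀ p ∈ B, ∀ q ∈ B, ∀ r ∈ B,
    p ⊓ (q ⊔ r) = (p ⊓ q) ⊔ (p ⊓ r) ∧ p ⊔ (q ⊓ r) = (p ⊔ q) ⊓ (p ⊔ r)) ∧
  (∀ b ∈ B, b = sSup {a | IsAtomOf B a ∧ a ≤ b}) ∧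
  (∃ b ∈ B, b ≠ ⊥ ∧ b ≠ ⊤)

section Das

variable {L : Type*} [CompleteLattice L] {B : Set L} {x y : L}

theorem le_das (B : Set L) (x : L) : x ≤ das B x :=
  le_sInf fun _ hy => hy.2

theorem das_eq_self_of_mem (hx : x ∈ B) : das B x = x :=
  le_antisymm (sInf_le ⟨hx, le_rfl⟩) (le_das B x)

theorem le_of_das_le_das_of_mem (hy : y ∈ B) (h : das B x ≤ das B y) : x ≤ y :=
  calc
    x ≤ das B x := le_das B x
    _ ≤ das B y := h
    _ = y := das_eq_self_of_mem hy

theorem isLeast_das {P : Set L → Prop} (hx : ∃ B, P B ∧ x ∈ B) :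
    IsLeast {w | ∃ B, P B ∧ w = das B x} x := by
  obtain ⟨B, hB, hxB⟩ := hx
  refine ⟨⟨B, hB, (das_eq_self_of_mem hxB).symm⟩, ?_⟩
  rintro _ ⟨C, -, rfl⟩
  exact le_das C x

theorem eq_of_forall_das_eq {P : Set L → Prop} (hx : ∃ B, P B ∧ x ∈ B) (hy : ∃ B, P B ∧ y ∈ B)
    (h : ∀ B, P B → das B x = das B y) : x = y := by
  obtain ⟨B, hB, hxB⟩ := hx
  obtain ⟨C, hC, hyC⟩ := hy
  exact le_antisymm (le_of_das_le_das_of_mem hyC (h C hC).le)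
    (le_of_das_le_das_of_mem hxB (h B hB).ge)

end Das

/-- The four-element algebra `{⊥, a, b, ⊤}`. It is the Boolean subalgebra generated by `a` when `b`
is the orthocomplement of `a`; taking `b` as an argument makes the definition symmetric in the two
elements. -/
def fourElementAlgebra {α : Type*} [LE α] [BoundedOrder α] (a b : α) : Set α :=
  {⊥, a, b, ⊤}

namespace fourElementAlgebra

section Order

variable {α : Type*} [LE α] [BoundedOrder α] (a b : α)

protected theorem comm : fourElementAlgebra a b = fourElementAlgebra b a := by
  simp only [fourElementAlgebra, Set.insert_comm a b]

theorem bot_mem : ⊥ ∈ fourElementAlgebra a b := by simp [fourElementAlgebra]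

theorem top_mem : ⊤ ∈ fourElementAlgebra a b := by simp [fourElementAlgebra]

theorem left_mem : a ∈ fourElementAlgebra a b := by simp [fourElementAlgebra]

protected theorem finite : (fourElementAlgebra a b).Finite := by simp [fourElementAlgebra]

end Order

section Lattice

variable {α : Type*} [Lattice α] [BoundedOrder α] {a b : α}

theorem infClosed (h : Disjoint a b) : InfClosed (fourElementAlgebra a b) := by
  rintro p (rfl | rfl | rfl | rfl) q (rfl | rfl | rfl | rfl) <;>
    simp [fourElementAlgebra, h.eq_bot, h.symm.eq_bot]

theorem supClosed (h : Codisjoint a b) : SupClosed (fourElementAlgebra a b) := by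
  rintro p (rfl | rfl | rfl | rfl) q (rfl | rfl | rfl | rfl) <;>
    simp [fourElementAlgebra, h.eq_top, h.symm.eq_top]

theorem distrib (h : IsCompl a b) {p q r : α} (hp : p ∈ fourElementAlgebra a b)
    (hq : q ∈ fourElementAlgebra a b) (hr : r ∈ fourElementAlgebra a b) :
    p ⊓ (q ⊔ r) = (p ⊓ q) ⊔ (p ⊓ r) ∧ p ⊔ (q ⊓ r) = (p ⊔ q) ⊓ (p ⊔ r) := by
  rcases hp with rfl | rfl | rfl | rfl <;> rcases hq with rfl | rfl | rfl | rfl <;>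
    rcases hr with rfl | rfl | rfl | rfl <;>
    simp [h.inf_eq_bot, h.symm.inf_eq_bot, h.sup_eq_top, h.symm.sup_eq_top]

end Lattice

section CompleteLattice

variable {L : Type*} [CompleteLattice L] {a b : L}

theorem isAtomOf_left (h : Disjoint a b) (ha : a ≠ ⊥) :
    IsAtomOf (fourElementAlgebra a b) a := by
  refine ⟨left_mem a b, ha, ?_⟩
  rintro y (rfl | rfl | rfl | rfl) hya
  · rfl
  · exact absurd hya (lt_irrefl _)
  · exact h.eq_bot_of_ge hya.le
  · exact absurd hya not_top_lt

theorem isAtomOf_right (h : Disjoint a b) (hb : b ≠ ⊥) :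
    IsAtomOf (fourElementAlgebra a b) b :=
  fourElementAlgebra.comm b a ▸ isAtomOf_left h.symm hb

theorem eq_sSup_isAtomOf (h : IsCompl a b) (ha : a ≠ ⊥) (hb : b ≠ ⊥) {c : L}
    (hc : c ∈ fourElementAlgebra a b) :
    c = sSup {d | IsAtomOf (fourElementAlgebra a b) d ∧ d ≤ c} := by
  have left_atom := isAtomOf_left h.disjoint ha
  have right_atom := isAtomOf_right h.disjoint hb
  refine le_antisymm ?_ (sSup_le fun d hd => hd.2)
  rcases hc with rfl | rfl | rfl | rfl
  · exact bot_le
  · exact le_sSup ⟨left_atom, le_rfl⟩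
  · exact le_sSup ⟨right_atom, le_rfl⟩
  · rw [← h.sup_eq_top]
    exact sup_le (le_sSup ⟨left_atom, le_sup_left⟩) (le_sSup ⟨right_atom, le_sup_right⟩)

end CompleteLattice

end fourElementAlgebra

section Complementation

variable {L : Type*} [CompleteLattice L] {oc : L → L}

theorem oc_mem_fourElementAlgebra (h_compl : ∀ x, IsCompl x (oc x))
    (h_inv : Function.Involutive oc) {a b : L} (hb : b ∈ fourElementAlgebra a (oc a)) :
    oc b ∈ fourElementAlgebra a (oc a) := by
  have oc_bot : oc ⊥ = ⊤ := eq_top_of_bot_isCompl (h_compl ⊥)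
  have oc_top : oc ⊤ = ⊥ := eq_bot_of_top_isCompl (h_compl ⊤)
  rcases hb with rfl | rfl | rfl | rfl <;>
    simp [fourElementAlgebra, oc_bot, oc_top, h_inv _]

theorem isCABS_fourElementAlgebra (h_compl : ∀ x, IsCompl x (oc x))
    (h_inv : Function.Involutive oc) {a : L} (ha_bot : a ≠ ⊥) (ha_top : a ≠ ⊤) :
    IsCABS oc (fourElementAlgebra a (oc a)) := by
  have h := h_compl a
  have hfin := fourElementAlgebra.finite a (oc a)
  have hoc_bot : oc a ≠ ⊥ := fun h0 => ha_top (eq_top_of_isCompl_bot (h0 ▸ h))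
  exact ⟨
    fun S hS => (fourElementAlgebra.infClosed h.disjoint).sInf_mem (hfin.subset hS)
      (fourElementAlgebra.top_mem a (oc a)) hS,
    fun S hS => (fourElementAlgebra.supClosed h.codisjoint).sSup_mem (hfin.subset hS)
      (fourElementAlgebra.bot_mem a (oc a)) hS,
    fun _ hb => oc_mem_fourElementAlgebra h_compl h_inv hb,
    fun _ hp _ hq _ hr => fourElementAlgebra.distrib h hp hq hr,
    fun _ hb => fourElementAlgebra.eq_sSup_isAtomOf h ha_bot hoc_bot hb,
    a, fourElementAlgebra.left_mem a (oc a), ha_bot, ha_top⟩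

theorem exists_isCABS_mem (h_compl : ∀ x, IsCompl x (oc x)) (h_inv : Function.Involutive oc)
    {z : L} (hz_bot : ⊥ < z) (hz_top : z < ⊤) (x : L) : ∃ B, IsCABS oc B ∧ x ∈ B := by
  have hz := isCABS_fourElementAlgebra h_compl h_inv hz_bot.ne' hz_top.ne
  by_cases hx_bot : x = ⊥
  · exact ⟨_, hz, hx_bot ▸ fourElementAlgebra.bot_mem z (oc z)⟩
  by_cases hx_top : x = ⊤
  · exact ⟨_, hz, hx_top ▸ fourElementAlgebra.top_mem z (oc z)⟩
  exact ⟨_, isCABS_fourElementAlgebra h_compl h_inv hx_bot hx_top,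
    fourElementAlgebra.left_mem x (oc x)⟩

theorem sInf_das_eq_self_and_das_injective_general (h_compl : ∀ x, IsCompl x (oc x))
    (h_inv : Function.Involutive oc) {z : L} (hz_bot : ⊥ < z) (hz_top : z < ⊤) :
    (∀ x : L, sInf {w | ∃ B : Set L, IsCABS oc B ∧ w = das B x} = x) ∧
    (∀ x y : L, (∀ B : Set L, IsCABS oc B → das B x = das B y) → x = y) := by
  have exists_mem := exists_isCABS_mem h_compl h_inv hz_bot hz_top
  exact ⟨fun x => (isLeast_das (exists_mem x)).isGLB.sInf_eq,
    fun x y => eq_of_forall_das_eq (exists_mem x) (exists_mem y)⟩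

end Complementation

/-- In a complete orthomodular lattice with a nontrivial element, the infimum of
the daseinisations of `x` over all nontrivial complete atomic Boolean subalgebras
equals `x`; consequently daseinisation is injective. -/
theorem sInf_das_eq_self_and_das_injective {L : Type*} [CompleteLattice L] (oc : L → L)
    (h_inf : ∀ x : L, x ⊓ oc x = ⊥) (h_sup : ∀ x : L, x ⊔ oc x = ⊤)
    (h_anti : ∀ x y : L, x ≤ y → oc y ≤ oc x) (h_inv : ∀ x : L, oc (oc x) = x)
    (h_om : ∀ x y : L, x ≤ y → y = x ⊔ (y ⊓ oc x))
    (z : L) (hz1 : ⊥ < z) (hz2 : z < ⊤) :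
    (∀ x : L, sInf {w | ∃ B : Set L, IsCABS oc B ∧ w = das B x} = x) ∧
    (∀ x y : L, (∀ B : Set L, IsCABS oc B → das B x = das B y) → x = y) :=
  sInf_das_eq_self_and_das_injective_general (fun x => .of_eq (h_inf x) (h_sup x)) h_inv hz1 hz2
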